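/- In the cyclic sliding puzzle on L cells in which exactly one token is marked and the other L−2 tokens are indistinguishable from one another, suppose a legal move sequence σ returns the blank to its original cell and let w(σ) denote the winding number of the blank, i.e. (number of moves in which the blank shifts from some cell c to c+1) minus (number of moves in which the blank shifts from some cell c to c−1), divided by L. Then the position of the marked token after σ is determined by the residue of w(σ) modulo L−1; in particular, the marked token returns to its original cell if and only if w(σ) ≡ 0 (mod L−1). -/

import Mathlib

/-!
The cyclic sliding puzzle on `L ≥ 3` cells `ℤ/L`.

A configuration places `L - 1` distinguishable tokens (indexed by `Fin (L-1)`)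
injectively on the `L` cells, leaving exactly one cell, the *blank*, empty.  A
legal move slides the token on a cell adjacent to the blank into the blank, so
the blank shifts to the adjacent cell the token vacated.  Since every cell other
than the blank carries a token, a legal move sequence is just a list of
directions: `true` means the blank shifts from its cell `c` to `c + 1`, and
`false` means it shifts from `c` to `c - 1`.  A state is the pair
`(blank cell, token-position function)`.
-/

namespace CyclicPuzzle

/-- One legal move in direction `d`: the blank at `s.1` shifts to
`s.1 + 1` (if `d = true`) or `s.1 - 1` (if `d = false`), and the token that
occupied that cell slides onto the old blank cell. -/
def step (L : ℕ) (s : ZMod L × (Fin (L - 1) → ZMod L)) (d : Bool) :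
    ZMod L × (Fin (L - 1) → ZMod L) :=
  (s.1 + (if d then 1 else -1),
    fun x => if s.2 x = s.1 + (if d then 1 else -1) then s.1 else s.2 x)

/-- The state reached from the state `s` by executing the legal move sequence `σ`. -/
def run (L : ℕ) (s : ZMod L × (Fin (L - 1) → ZMod L)) (σ : List Bool) :
    ZMod L × (Fin (L - 1) → ZMod L) :=
  σ.foldl (step L) s

end CyclicPuzzle

/-!
Measure the position of a token from the blank in the `+1` direction: its gap `g` lies in
`{1, …, L - 1}`. A shift of the blank by `+1` lowers `g` by one, except that the token with `g = 1`
is jumped over and acquires the gap `L - 1`; a shift by `-1` does the reverse. Modulo `L - 1` there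
is no exception: the gap changes by exactly `∓1`. So after `σ` it has changed by minus the net shift
of the blank, which is `w * L ≡ w (mod L - 1)` when the winding number is `w`, and a gap in
`{1, …, L - 1}` is determined by its class modulo `L - 1`.
-/

namespace CyclicPuzzle

section Residue

variable {n : ℕ} [NeZero n]

theorem natCast_eq_one_zmod_pred : (n : ZMod (n - 1)) = 1 := by
  calc (n : ZMod (n - 1)) = ((n - 1 + 1 : ℕ) : ZMod (n - 1)) :=
        congrArg Nat.cast (Nat.sub_one_add_one (NeZero.ne n)).symm
    _ = 1 := by rw [Nat.cast_add_one, ZMod.natCast_self, zero_add]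

theorem val_sub_one_add_one {a : ZMod n} (ha : a ≠ 0) : (a - 1).val + 1 = a.val := by
  have hn : n ≠ 1 := ZMod.nontrivial_iff.mp (nontrivial_of_ne a 0 ha)
  have hpos : 1 ≤ a.val := Nat.one_le_iff_ne_zero.mpr ((ZMod.val_ne_zero a).mpr ha)
  rw [ZMod.val_sub (by rwa [ZMod.val_one'' hn]), ZMod.val_one'' hn, Nat.sub_add_cancel hpos]

theorem natCast_val_neg_one : ((-1 : ZMod n).val : ZMod (n - 1)) = 0 := by
  have h : (-1 : ZMod n).val = n - 1 := by
    obtain ⟨m, rfl⟩ := Nat.exists_eq_succ_of_ne_zero (NeZero.ne n)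
    exact ZMod.val_neg_one m
  rw [h, ZMod.natCast_self]

theorem natCast_val_inj_of_ne_zero {a b : ZMod n} (ha : a ≠ 0) (hb : b ≠ 0) :
    (a.val : ZMod (n - 1)) = b.val ↔ a = b := by
  refine ⟨fun h => ZMod.val_injective n ?_, fun h => h ▸ rfl⟩
  have ha_pos := Nat.pos_of_ne_zero ((ZMod.val_ne_zero a).mpr ha)
  have hb_pos := Nat.pos_of_ne_zero ((ZMod.val_ne_zero b).mpr hb)
  have ha_lt := ZMod.val_lt a
  have hb_lt := ZMod.val_lt b
  exact ((ZMod.natCast_eq_natCast_iff _ _ _).mp h).eq_of_abs_lt (by rw [abs_lt]; omega)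

end Residue

variable {L : ℕ}

/-- The distance from the blank to the token `x` in the `+1` direction. That `x` does not sit on the
blank cell is expressed as `gap s x ≠ 0`. -/
def gap (s : ZMod L × (Fin (L - 1) → ZMod L)) (x : Fin (L - 1)) : ZMod L :=
  s.2 x - s.1

/-- The gap of `x`, taken as an integer in `{1, …, L - 1}` and reduced modulo `L - 1`: the quantity
on which every shift of the blank acts by a translation. -/
def phase (s : ZMod L × (Fin (L - 1) → ZMod L)) (x : Fin (L - 1)) : ZMod (L - 1) :=
  (gap s x).val

/-- The number of `+1` shifts of the blank minus the number of `-1` shifts; for a `σ` that returns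
the blank to its cell this is `L` times the winding number. -/
def netShift (σ : List Bool) : ℤ :=
  σ.count true - σ.count false

theorem netShift_cons (d : Bool) (σ : List Bool) :
    netShift (d :: σ) = (if d then 1 else -1) + netShift σ := by
  cases d <;> grind [netShift]

variable {s : ZMod L × (Fin (L - 1) → ZMod L)} {x : Fin (L - 1)}

theorem gap_step (d : Bool) :
    gap (step L s d) x =
      if gap s x = (if d then 1 else -1) then -(if d then 1 else -1)
      else gap s x - (if d then 1 else -1) := by
  simp only [gap, step, sub_eq_iff_eq_add']
  split_ifs <;> ring

theorem gap_step_ne_zero (hx : gap s x ≠ 0) (d : Bool) : gap (step L s d) x ≠ 0 := by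
  have := nontrivial_of_ne _ _ hx
  have hshift : (if d then 1 else -1 : ZMod L) ≠ 0 := by cases d <;> simp
  rw [gap_step]
  generalize (if d then 1 else -1 : ZMod L) = e at hshift ⊢
  split_ifs with h
  · exact neg_ne_zero.mpr hshift
  · exact sub_ne_zero.mpr h

theorem gap_run_ne_zero (hx : gap s x ≠ 0) (σ : List Bool) : gap (run L s σ) x ≠ 0 := by
  induction σ generalizing s with
  | nil => exact hx
  | cons d _ ih => exact ih (gap_step_ne_zero hx d)

variable [NeZero L]

theorem phase_step (hx : gap s x ≠ 0) (d : Bool) :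
    phase (step L s d) x = phase s x - (if d then 1 else -1) := by
  have val_one : (1 : ZMod L).val = 1 :=
    ZMod.val_one'' (ZMod.nontrivial_iff.mp (nontrivial_of_ne _ _ hx))
  rw [phase, phase, gap_step]
  cases d
  · simp only [Bool.false_eq_true, if_false, neg_neg, sub_neg_eq_add]
    split_ifs with h
    · rw [h, val_one, natCast_val_neg_one, Nat.cast_one, zero_add]
    · have hne : gap s x + 1 ≠ 0 := fun h0 => h (eq_neg_of_add_eq_zero_left h0)
      rw [← val_sub_one_add_one hne, add_sub_cancel_right, Nat.cast_add_one]
  · simp only [if_true]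
    split_ifs with h
    · rw [h, val_one, natCast_val_neg_one, Nat.cast_one, sub_self]
    · rw [← val_sub_one_add_one hx, Nat.cast_add_one, add_sub_cancel_right]

theorem phase_run (hx : gap s x ≠ 0) (σ : List Bool) :
    phase (run L s σ) x = phase s x - netShift σ := by
  induction σ generalizing s with
  | nil => simp [run, netShift]
  | cons d σ ih =>
    calc phase (run L (step L s d) σ) x
        = phase s x - (if d then 1 else -1) - netShift σ := by
          rw [ih (gap_step_ne_zero hx d), phase_step hx]
      _ = phase s x - netShift (d :: σ) := by
          rw [netShift_cons]; push_cast; ring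

theorem run_snd_eq_iff (hx : s.2 x ≠ s.1) {σ τ : List Bool}
    (hblank : (run L s σ).1 = (run L s τ).1) :
    (run L s σ).2 x = (run L s τ).2 x ↔
      (netShift σ : ZMod (L - 1)) = netShift τ := by
  have hgap : gap s x ≠ 0 := sub_ne_zero.mpr hx
  calc (run L s σ).2 x = (run L s τ).2 x
      ↔ gap (run L s σ) x = gap (run L s τ) x := by rw [gap, gap, hblank, sub_left_inj]
    _ ↔ phase (run L s σ) x = phase (run L s τ) x :=
        (natCast_val_inj_of_ne_zero (gap_run_ne_zero hgap σ) (gap_run_ne_zero hgap τ)).symm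
    _ ↔ (netShift σ : ZMod (L - 1)) = netShift τ := by
        rw [phase_run hgap, phase_run hgap, sub_right_inj]

theorem intCast_netShift_eq_of_eq_mul {σ : List Bool} {w : ℤ} (hw : netShift σ = w * L) :
    (netShift σ : ZMod (L - 1)) = w := by
  rw [hw, Int.cast_mul, Int.cast_natCast, natCast_eq_one_zmod_pred, mul_one]

end CyclicPuzzle

open CyclicPuzzle in
/-- In the cyclic sliding puzzle on `L ≥ 3` cells with one
marked token `x₀` (the other `L - 2` tokens being indistinguishable), for any
legal move sequence `σ` returning the blank to its original cell `b₀` with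
winding number `w` (i.e. `(#(+1)-moves) - (#(-1)-moves) = w * L`), the final
position of the marked token is determined by the residue of `w` mod `L - 1`;
in particular the marked token is back on its original cell iff
`w ≡ 0 (mod L-1)`. -/
theorem statement10 (L : ℕ) (hL : 3 ≤ L)
    (b₀ : ZMod L) (p₀ : Fin (L - 1) → ZMod L)
    (hinj : Function.Injective p₀) (hb : ∀ x, p₀ x ≠ b₀)
    (x₀ : Fin (L - 1)) :
    (∀ (σ σ' : List Bool) (w w' : ℤ),
      (run L (b₀, p₀) σ).1 = b₀ → (run L (b₀, p₀) σ').1 = b₀ →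
      (σ.count true : ℤ) - (σ.count false : ℤ) = w * L →
      (σ'.count true : ℤ) - (σ'.count false : ℤ) = w' * L →
      (w : ZMod (L - 1)) = (w' : ZMod (L - 1)) →
      (run L (b₀, p₀) σ).2 x₀ = (run L (b₀, p₀) σ').2 x₀) ∧
    (∀ (σ : List Bool) (w : ℤ),
      (run L (b₀, p₀) σ).1 = b₀ →
      (σ.count true : ℤ) - (σ.count false : ℤ) = w * L →
      ((run L (b₀, p₀) σ).2 x₀ = p₀ x₀ ↔ (w : ZMod (L - 1)) = 0)) := by
  have : NeZero L := ⟨by omega⟩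
  constructor
  · intro σ σ' w w' hσ hσ' hw hw' hww'
    rwa [run_snd_eq_iff (hb x₀) (hσ.trans hσ'.symm), intCast_netShift_eq_of_eq_mul hw,
      intCast_netShift_eq_of_eq_mul hw']
  · intro σ w hσ hw
    have hnil : (run L (b₀, p₀) σ).1 = (run L (b₀, p₀) []).1 := hσ
    calc (run L (b₀, p₀) σ).2 x₀ = p₀ x₀
        ↔ (netShift σ : ZMod (L - 1)) = netShift [] := run_snd_eq_iff (hb x₀) hnil
      _ ↔ (w : ZMod (L - 1)) = 0 := by
        rw [intCast_netShift_eq_of_eq_mul hw]; simp [netShift]
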